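/- Uniqueness of the spin projection up to scalar: let F : V ⊗ Δ → Δ be a ℂ-linear map such that for all v, w ∈ W, λ, μ ∈ W*, x ∈ V and a ∈ Δ the following five intertwining relations hold: (i) F(A_{v,w}(x) ⊗ a) + F(x ⊗ X_v X_w a) = X_v X_w F(x ⊗ a); (ii) F(C_v(x) ⊗ a) + (1/√2) F(x ⊗ X_v D a) = (1/√2) X_v D F(x ⊗ a); (iii) F(H_{v,λ}(x) ⊗ a) + F(x ⊗ (X_v D_λ − (1/2)λ(v)) a) = (X_v D_λ − (1/2)λ(v)) F(x ⊗ a); (iv) F(B_λ(x) ⊗ a) + (1/√2) F(x ⊗ D D_λ a) = (1/√2) D D_λ F(x ⊗ a); (v) F(E_{λ,μ}(x) ⊗ a) + F(x ⊗ D_λ D_μ a) = D_λ D_μ F(x ⊗ a). Then there is a scalar c ∈ ℂ with F = c · π. -/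

import Mathlib

noncomputable section

open TensorProduct

/-- `W = ℂ^m`. -/
abbrev SpinW (m : ℕ) : Type := Fin m → ℂ

/-- `Δ = ⋀ W`, the exterior algebra of `W`. -/
abbrev SpinDelta (m : ℕ) : Type := ExteriorAlgebra ℂ (SpinW m)

/-- `V = W ⊕ W* ⊕ ℂe`. -/
abbrev SpinV (m : ℕ) : Type := SpinW m × Module.Dual ℂ (SpinW m) × ℂ

/-- The standard basis vector `w_i` of `W`. -/
def wB (m : ℕ) (i : Fin m) : SpinW m := Pi.single i 1

/-- The dual basis vector `w_i*` of `W*`. -/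
def wD (m : ℕ) (i : Fin m) : Module.Dual ℂ (SpinW m) := LinearMap.proj i

/-- `w_i` regarded as an element of `V`. -/
def wV (m : ℕ) (i : Fin m) : SpinV m := (wB m i, 0, 0)

/-- `w_i*` regarded as an element of `V`. -/
def wsV (m : ℕ) (i : Fin m) : SpinV m := (0, wD m i, 0)

/-- `e` regarded as an element of `V`. -/
def eV (m : ℕ) : SpinV m := (0, 0, 1)

/-- `X_v : Δ → Δ`, left exterior multiplication by `v ∈ W`. -/
def Xop (m : ℕ) (v : SpinW m) : SpinDelta m →ₗ[ℂ] SpinDelta m :=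
  LinearMap.mulLeft ℂ (ExteriorAlgebra.ι ℂ v)

/-- `D_λ : Δ → Δ`, the interior product with `λ ∈ W*`;
it satisfies `D_λ(v₁ ∧ ⋯ ∧ v_k) = Σ (−1)^{i−1} λ(v_i) v₁ ∧ ⋯ ∧ v̂_i ∧ ⋯ ∧ v_k`. -/
def Dop (m : ℕ) (lam : Module.Dual ℂ (SpinW m)) : SpinDelta m →ₗ[ℂ] SpinDelta m :=
  CliffordAlgebra.contractLeft (Q := (0 : QuadraticForm ℂ (SpinW m))) lam

/-- The grading operator `D : Δ → Δ` acting by `(−1)^k` on `⋀^k W`. -/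
def Gop (m : ℕ) : SpinDelta m →ₗ[ℂ] SpinDelta m :=
  (CliffordAlgebra.involute (Q := (0 : QuadraticForm ℂ (SpinW m)))).toLinearMap

/-- Projection `V → W`. -/
def pW (m : ℕ) : SpinV m →ₗ[ℂ] SpinW m := LinearMap.fst ℂ _ _

/-- Projection `V → W*`. -/
def pD (m : ℕ) : SpinV m →ₗ[ℂ] Module.Dual ℂ (SpinW m) :=
  (LinearMap.fst ℂ _ ℂ).comp (LinearMap.snd ℂ (SpinW m) _)

/-- Projection `V → ℂ` (the `e`-coordinate). -/
def pC (m : ℕ) : SpinV m →ₗ[ℂ] ℂ :=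
  (LinearMap.snd ℂ _ ℂ).comp (LinearMap.snd ℂ (SpinW m) _)

/-- Inclusion `W → V`. -/
def iW (m : ℕ) : SpinW m →ₗ[ℂ] SpinV m :=
  LinearMap.inl ℂ (SpinW m) (Module.Dual ℂ (SpinW m) × ℂ)

/-- Inclusion `W* → V`. -/
def iD (m : ℕ) : Module.Dual ℂ (SpinW m) →ₗ[ℂ] SpinV m :=
  (LinearMap.inr ℂ (SpinW m) _).comp (LinearMap.inl ℂ (Module.Dual ℂ (SpinW m)) ℂ)

/-- Inclusion `ℂe → V`. -/
def iC (m : ℕ) : ℂ →ₗ[ℂ] SpinV m :=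
  (LinearMap.inr ℂ (SpinW m) _).comp (LinearMap.inr ℂ (Module.Dual ℂ (SpinW m)) ℂ)

/-- The symmetric bilinear form `ω` on `V`:
`ω((u,η,c),(u',η',c')) = η'(u) + η(u') + c·c'`; so `ω(w_i, w_j*) = δ_{ij}`,
`ω(e,e) = 1`, `W` and `W*` are isotropic and `e` is orthogonal to both. -/
def omegaB (m : ℕ) : SpinV m →ₗ[ℂ] SpinV m →ₗ[ℂ] ℂ :=
  ((((LinearMap.llcomp ℂ (SpinV m) (SpinW m) ℂ).flip (pW m)).comp (pD m)).flip
  + ((LinearMap.llcomp ℂ (SpinV m) (SpinW m) ℂ).flip (pW m)).comp (pD m))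
  + (pC m).smulRight (pC m)

/-- The spin projection `π : V ⊗ Δ → Δ` as a bilinear map:
`(v,λ,c) ⊗ a ↦ √2 X_v(a) + √2 D_λ(a) + c D(a)`. -/
def piB (m : ℕ) : SpinV m →ₗ[ℂ] SpinDelta m →ₗ[ℂ] SpinDelta m :=
  (Real.sqrt 2 : ℂ) • (((LinearMap.mul ℂ (SpinDelta m)).comp ((ExteriorAlgebra.ι ℂ).comp (pW m)))
      + (CliffordAlgebra.contractLeft (Q := (0 : QuadraticForm ℂ (SpinW m)))).comp (pD m))
  + (pC m).smulRight (Gop m)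

/-- The spin projection `π : V ⊗ Δ → Δ`. -/
def piMap (m : ℕ) : SpinV m ⊗[ℂ] SpinDelta m →ₗ[ℂ] SpinDelta m :=
  TensorProduct.lift (piB m)

/-- The spin injection `ι : Δ → V ⊗ Δ`,
`a ↦ √2 Σᵢ (wᵢ ⊗ D_{wᵢ*}(a) + wᵢ* ⊗ X_{wᵢ}(a)) + e ⊗ D(a)`. -/
def iotaMap (m : ℕ) : SpinDelta m →ₗ[ℂ] SpinV m ⊗[ℂ] SpinDelta m :=
  (Real.sqrt 2 : ℂ) • (∑ i : Fin m,
      ((TensorProduct.mk ℂ (SpinV m) (SpinDelta m) (wV m i)).comp (Dop m (wD m i))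
        + (TensorProduct.mk ℂ (SpinV m) (SpinDelta m) (wsV m i)).comp (Xop m (wB m i))))
  + (TensorProduct.mk ℂ (SpinV m) (SpinDelta m) (eV m)).comp (Gop m)

/-- The invariant element `θ = Σᵢ (wᵢ ⊗ wᵢ* + wᵢ* ⊗ wᵢ) + e ⊗ e ∈ V ⊗ V`. -/
def theta (m : ℕ) : SpinV m ⊗[ℂ] SpinV m :=
  (∑ i : Fin m, (wV m i ⊗ₜ wsV m i + wsV m i ⊗ₜ wV m i)) + eV m ⊗ₜ eV m

/-- Evaluation of a dual vector at `w ∈ W`. -/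
def evalW (m : ℕ) (w : SpinW m) : Module.Dual ℂ (SpinW m) →ₗ[ℂ] ℂ :=
  Module.Dual.eval ℂ (SpinW m) w

/-- `A_{v,w} : V → V`, with `A(u) = 0`, `A(η) = η(w)v − η(v)w`, `A(e) = 0`. -/
def Amap (m : ℕ) (v w : SpinW m) : SpinV m →ₗ[ℂ] SpinV m :=
  (iW m) ∘ₗ (((evalW m w).smulRight v - (evalW m v).smulRight w) ∘ₗ pD m)

/-- `B_λ : V → V`, with `B(u) = λ(u)e`, `B(η) = 0`, `B(e) = −λ`. -/
def Bmap (m : ℕ) (lam : Module.Dual ℂ (SpinW m)) : SpinV m →ₗ[ℂ] SpinV m :=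
  (iC m) ∘ₗ (lam ∘ₗ pW m) - (iD m) ∘ₗ ((pC m).smulRight lam)

/-- `C_v : V → V`, with `C(u) = 0`, `C(η) = −η(v)e`, `C(e) = v`. -/
def Cmap (m : ℕ) (v : SpinW m) : SpinV m →ₗ[ℂ] SpinV m :=
  (iW m) ∘ₗ ((pC m).smulRight v) - (iC m) ∘ₗ ((evalW m v) ∘ₗ pD m)

/-- `H_{v,λ} : V → V`, with `H(u) = λ(u)v`, `H(η) = −η(v)λ`, `H(e) = 0`. -/
def Hmap (m : ℕ) (v : SpinW m) (lam : Module.Dual ℂ (SpinW m)) : SpinV m →ₗ[ℂ] SpinV m :=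
  (iW m) ∘ₗ ((lam ∘ₗ pW m).smulRight v) - (iD m) ∘ₗ (((evalW m v) ∘ₗ pD m).smulRight lam)

/-- `E_{λ,μ} : V → V`, with `E(u) = μ(u)λ − λ(u)μ`, `E(η) = 0`, `E(e) = 0`. -/
def Emap (m : ℕ) (lam mu : Module.Dual ℂ (SpinW m)) : SpinV m →ₗ[ℂ] SpinV m :=
  (iD m) ∘ₗ ((mu ∘ₗ pW m).smulRight lam - (lam ∘ₗ pW m).smulRight mu)

/-- The contraction `ω ⊗ id_Δ : V ⊗ (V ⊗ Δ) → Δ`, `x ⊗ y ⊗ b ↦ ω(x,y) b`. -/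
def contrMap (m : ℕ) : SpinV m ⊗[ℂ] (SpinV m ⊗[ℂ] SpinDelta m) →ₗ[ℂ] SpinDelta m :=
  (TensorProduct.lid ℂ (SpinDelta m)).toLinearMap
    ∘ₗ (TensorProduct.map (TensorProduct.lift (omegaB m)) LinearMap.id)
    ∘ₗ (TensorProduct.assoc ℂ (SpinV m) (SpinV m) (SpinDelta m)).symm.toLinearMap

/-- The swap `τ ⊗ id_Δ : V ⊗ (V ⊗ Δ) → V ⊗ (V ⊗ Δ)`, `x ⊗ y ⊗ b ↦ y ⊗ x ⊗ b`. -/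
def swapMap (m : ℕ) :
    SpinV m ⊗[ℂ] (SpinV m ⊗[ℂ] SpinDelta m) →ₗ[ℂ] SpinV m ⊗[ℂ] (SpinV m ⊗[ℂ] SpinDelta m) :=
  (TensorProduct.assoc ℂ (SpinV m) (SpinV m) (SpinDelta m)).toLinearMap
    ∘ₗ (LinearMap.rTensor (SpinDelta m) (TensorProduct.comm ℂ (SpinV m) (SpinV m)).toLinearMap)
    ∘ₗ (TensorProduct.assoc ℂ (SpinV m) (SpinV m) (SpinDelta m)).symm.toLinearMap

section Aux
variable {m : ℕ}

theorem aux_Gop_mul (v : SpinW m) (a : SpinDelta m) :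
    Gop m (Xop m v a) = - Xop m v (Gop m a) := by
  change CliffordAlgebra.involute (CliffordAlgebra.ι _ v * a)
    = - (CliffordAlgebra.ι _ v * CliffordAlgebra.involute a)
  rw [map_mul, CliffordAlgebra.involute_ι, neg_mul]

theorem aux_Gop_Gop (a : SpinDelta m) : Gop m (Gop m a) = a :=
  CliffordAlgebra.involute_involute a

theorem aux_Gop_algebraMap (r : ℂ) :
    Gop m (algebraMap ℂ (SpinDelta m) r) = algebraMap ℂ (SpinDelta m) r :=
  AlgHom.commutes (CliffordAlgebra.involute (Q := (0 : QuadraticForm ℂ (SpinW m)))) r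

theorem aux_Dop_algebraMap (lam : Module.Dual ℂ (SpinW m)) (r : ℂ) :
    Dop m lam (algebraMap ℂ (SpinDelta m) r) = 0 :=
  CliffordAlgebra.contractLeft_algebraMap (0 : QuadraticForm ℂ (SpinW m)) lam r

theorem aux_Dop_mul (lam : Module.Dual ℂ (SpinW m)) (v : SpinW m) (a : SpinDelta m) :
    Dop m lam (Xop m v a) = lam v • a - Xop m v (Dop m lam a) :=
  CliffordAlgebra.contractLeft_ι_mul (Q := (0 : QuadraticForm ℂ (SpinW m))) lam v a

theorem aux_ind {P : SpinDelta m → Prop} (h0 : ∀ r : ℂ, P (algebraMap ℂ _ r))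
    (hadd : ∀ x y, P x → P y → P (x + y)) (hmul : ∀ x v, P x → P (Xop m v x)) : ∀ x, P x :=
  CliffordAlgebra.left_induction (Q := (0 : QuadraticForm ℂ (SpinW m))) h0 hadd hmul

theorem aux_Dop_Gop (lam : Module.Dual ℂ (SpinW m)) (a : SpinDelta m) :
    Dop m lam (Gop m a) = - Gop m (Dop m lam a) := by
  induction a using aux_ind with
  | h0 r => simp [aux_Gop_algebraMap, aux_Dop_algebraMap]
  | hadd x y hx hy => simp only [map_add, hx, hy, neg_add]
  | hmul x v hx =>
    simp only [aux_Gop_mul, aux_Dop_mul, map_neg, map_sub, map_smul, hx]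

/-- The Euler operator. -/
def auxE (m : ℕ) : SpinDelta m →ₗ[ℂ] SpinDelta m :=
  ∑ i : Fin m, Xop m (wB m i) ∘ₗ Dop m (wD m i)

theorem auxE_apply (a : SpinDelta m) :
    auxE m a = ∑ i : Fin m, Xop m (wB m i) (Dop m (wD m i) a) := by
  simp [auxE]

theorem aux_XX (u v : SpinW m) (a : SpinDelta m) :
    Xop m u (Xop m v a) = - Xop m v (Xop m u a) := by
  have h : ExteriorAlgebra.ι ℂ u * ExteriorAlgebra.ι ℂ v
      = - (ExteriorAlgebra.ι ℂ v * ExteriorAlgebra.ι ℂ u) :=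
    eq_neg_of_add_eq_zero_left (ExteriorAlgebra.ι_add_mul_swap u v)
  simp only [Xop, LinearMap.mulLeft_apply, ← mul_assoc, h, neg_mul]

theorem aux_sum_X (v : SpinW m) (a : SpinDelta m) :
    ∑ i : Fin m, wD m i v • Xop m (wB m i) a = Xop m v a := by
  have hv : v = ∑ i, v i • wB m i := by
    ext j
    simp [wB, Finset.sum_apply, Pi.single_apply]
  conv_rhs => rw [hv]
  simp [Xop, wD, Finset.sum_mul]

theorem auxE_mul (v : SpinW m) (a : SpinDelta m) :
    auxE m (Xop m v a) = Xop m v a + Xop m v (auxE m a) := by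
  simp only [auxE_apply, aux_Dop_mul, map_sub, map_smul, Finset.sum_sub_distrib, aux_sum_X, map_sum]
  rw [sub_eq_add_neg, ← Finset.sum_neg_distrib]
  congr 1
  refine Finset.sum_congr rfl fun i _ => ?_
  rw [aux_XX v]

theorem auxE_of_mem (n : ℕ) (a : SpinDelta m) (ha : a ∈ ⋀[ℂ]^n (SpinW m)) :
    auxE m a = (n : ℂ) • a := by
  induction ha using Submodule.pow_induction_on_left' with
  | algebraMap r => simp [auxE_apply, aux_Dop_algebraMap]
  | add x y i hx hy h1 h2 => simp [h1, h2]
  | mem_mul w hw i x hx h =>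
    obtain ⟨v, rfl⟩ := hw
    have := auxE_mul v x
    rw [h] at this
    change auxE m (Xop m v x) = _ • Xop m v x
    rw [this, map_smul]
    push_cast
    module

theorem auxE_proj (j : ℕ) (a : SpinDelta m) :
    GradedAlgebra.proj (fun i : ℕ => ⋀[ℂ]^i (SpinW m)) j (auxE m a)
      = (j : ℂ) • GradedAlgebra.proj (fun i : ℕ => ⋀[ℂ]^i (SpinW m)) j a := by
  induction a using DirectSum.Decomposition.inductionOn (fun i : ℕ => ⋀[ℂ]^i (SpinW m)) with
  | zero => simp
  | add x y hx hy => simp only [map_add, hx, hy, smul_add]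
  | @homogeneous i x =>
    rw [auxE_of_mem (m := m) i (x : SpinDelta m) x.2, map_smul]
    by_cases h : i = j
    · subst h; rfl
    · rw [GradedAlgebra.proj_apply, DirectSum.decompose_of_mem_ne (fun i : ℕ => ⋀[ℂ]^i (SpinW m)) x.2 h]
      simp

theorem aux_mem (n : ℕ) (a : SpinDelta m) (h : auxE m a = (n : ℂ) • a) :
    a ∈ ⋀[ℂ]^n (SpinW m) := by
  classical
  rw [← DirectSum.sum_support_decompose (fun i : ℕ => ⋀[ℂ]^i (SpinW m)) a]
  refine Submodule.sum_mem _ fun j _ => ?_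
  by_cases hj : j = n
  · subst hj; exact SetLike.coe_mem _
  · have h1 := auxE_proj j a
    rw [h, map_smul, ← sub_eq_zero, ← sub_smul, smul_eq_zero] at h1
    rcases h1 with h1 | h1
    · exact absurd (by exact_mod_cast (sub_eq_zero.1 h1).symm) hj
    · rw [GradedAlgebra.proj_apply] at h1
      rw [h1]; exact Submodule.zero_mem _

theorem aux_S (hm : 1 ≤ m) (S : SpinDelta m →ₗ[ℂ] SpinDelta m)
    (hX : ∀ v w a, S (Xop m v (Xop m w a)) = Xop m v (Xop m w (S a)))
    (hH : ∀ v lam a, S (Xop m v (Dop m lam a)) = Xop m v (Dop m lam (S a))) :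
    ∃ p q : ℂ, ∀ a, S a = p • a + q • Gop m a := by
  have hE : ∀ a, auxE m (S a) = S (auxE m a) := fun a => by
    simp only [auxE_apply, map_sum, hH]
  have hone : ∃ α : ℂ, algebraMap ℂ (SpinDelta m) α = S 1 := by
    have : S 1 ∈ ⋀[ℂ]^0 (SpinW m) := by
      apply aux_mem
      rw [hE, ← map_one (algebraMap ℂ (SpinDelta m))]
      simp only [auxE_apply, aux_Dop_algebraMap]
      simp
    rw [ExteriorAlgebra.exteriorPower, pow_zero] at this
    exact Submodule.mem_one.1 this
  obtain ⟨α, hα⟩ := hone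
  have hw : ∀ w : SpinW m, ∃ w' : SpinW m, ExteriorAlgebra.ι ℂ w' = S (ExteriorAlgebra.ι ℂ w) := by
    intro w
    have h1 : ExteriorAlgebra.ι ℂ w = Xop m w 1 := by simp [Xop]
    have : S (ExteriorAlgebra.ι ℂ w) ∈ ⋀[ℂ]^1 (SpinW m) := by
      apply aux_mem
      rw [hE, h1, auxE_mul, ← map_one (algebraMap ℂ (SpinDelta m))]
      simp only [auxE_apply, aux_Dop_algebraMap]
      simp
    rw [ExteriorAlgebra.exteriorPower, pow_one] at this
    exact this
  choose φ hφ using hw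
  have hι : ∀ w : SpinW m, ExteriorAlgebra.ι ℂ w = Xop m w (algebraMap ℂ _ 1) := by simp [Xop]
  have hβ : ∃ β : ℂ, ∀ v, S (ExteriorAlgebra.ι ℂ v) = β • ExteriorAlgebra.ι ℂ v := by
    let i0 : Fin m := ⟨0, hm⟩
    refine ⟨wD m i0 (φ (wB m i0)), fun v => ?_⟩
    have h := hH v (wD m i0) (ExteriorAlgebra.ι ℂ (wB m i0))
    rw [← hφ, hι, hι (φ _)] at h
    simp only [aux_Dop_mul, aux_Dop_algebraMap, map_zero, sub_zero, map_smul] at h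
    rw [← hι] at h
    have h2 : wD m i0 (wB m i0) = 1 := by simp [wD, wB]
    rwa [h2, one_smul] at h
  obtain ⟨β, hβ⟩ := hβ
  have hs : ∀ r : ℂ, S (algebraMap ℂ _ r) = α • algebraMap ℂ (SpinDelta m) r := by
    intro r
    rw [Algebra.algebraMap_eq_smul_one, map_smul, ← hα, Algebra.algebraMap_eq_smul_one, smul_comm]
  have hs' : ∀ (r : ℂ) u, S (Xop m u (algebraMap ℂ _ r))
      = β • Xop m u (algebraMap ℂ (SpinDelta m) r) := by
    intro r u
    have : Xop m u (algebraMap ℂ (SpinDelta m) r) = r • ExteriorAlgebra.ι ℂ u := by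
      rw [Algebra.algebraMap_eq_smul_one, map_smul]; simp [Xop]
    rw [this, map_smul, hβ, smul_comm]
  refine ⟨(α + β) / 2, (α - β) / 2, ?_⟩
  suffices h : ∀ a, (S a = ((α + β) / 2) • a + ((α - β) / 2) • Gop m a) ∧
      ∀ u, S (Xop m u a) = ((α + β) / 2) • Xop m u a + ((α - β) / 2) • Gop m (Xop m u a) from
    fun a => (h a).1
  intro a
  induction a using aux_ind with
  | h0 r =>
    refine ⟨?_, fun u => ?_⟩
    · rw [hs, aux_Gop_algebraMap]; module
    · rw [hs', aux_Gop_mul, aux_Gop_algebraMap]; module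
  | hadd x y hx hy =>
    refine ⟨?_, fun u => ?_⟩
    · simp only [map_add, hx.1, hy.1]; module
    · simp only [map_add, hx.2, hy.2]; module
  | hmul x v hx =>
    refine ⟨hx.2 v, fun u => ?_⟩
    rw [hX, hx.1]
    simp only [map_add, map_smul, aux_Gop_mul, map_neg, neg_neg]

end Aux

/-- Uniqueness of the spin projection up to scalar: any ℂ-linear map `F : V ⊗ Δ → Δ`
satisfying the five intertwining relations for the generators of `𝔰𝔬(2m+1)` is a scalar
multiple of `π`. -/
theorem spin_projection_unique (m : ℕ) (hm : 1 ≤ m)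
    (F : SpinV m ⊗[ℂ] SpinDelta m →ₗ[ℂ] SpinDelta m)
    (hi : ∀ (v w : SpinW m) (x : SpinV m) (a : SpinDelta m),
      F ((Amap m v w x) ⊗ₜ a) + F (x ⊗ₜ (Xop m v (Xop m w a)))
        = Xop m v (Xop m w (F (x ⊗ₜ a))))
    (hii : ∀ (v : SpinW m) (x : SpinV m) (a : SpinDelta m),
      F ((Cmap m v x) ⊗ₜ a) + ((Real.sqrt 2 : ℂ))⁻¹ • F (x ⊗ₜ (Xop m v (Gop m a)))
        = ((Real.sqrt 2 : ℂ))⁻¹ • Xop m v (Gop m (F (x ⊗ₜ a))))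
    (hiii : ∀ (v : SpinW m) (lam : Module.Dual ℂ (SpinW m)) (x : SpinV m) (a : SpinDelta m),
      F ((Hmap m v lam x) ⊗ₜ a)
          + F (x ⊗ₜ (Xop m v (Dop m lam a) - ((1 / 2 : ℂ) * lam v) • a))
        = Xop m v (Dop m lam (F (x ⊗ₜ a))) - ((1 / 2 : ℂ) * lam v) • F (x ⊗ₜ a))
    (hiv : ∀ (lam : Module.Dual ℂ (SpinW m)) (x : SpinV m) (a : SpinDelta m),
      F ((Bmap m lam x) ⊗ₜ a) + ((Real.sqrt 2 : ℂ))⁻¹ • F (x ⊗ₜ (Gop m (Dop m lam a)))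
        = ((Real.sqrt 2 : ℂ))⁻¹ • Gop m (Dop m lam (F (x ⊗ₜ a))))
    (hv : ∀ (lam mu : Module.Dual ℂ (SpinW m)) (x : SpinV m) (a : SpinDelta m),
      F ((Emap m lam mu x) ⊗ₜ a) + F (x ⊗ₜ (Dop m lam (Dop m mu a)))
        = Dop m lam (Dop m mu (F (x ⊗ₜ a)))) :
    ∃ c : ℂ, F = c • piMap m := by
  have hS : ∃ p q : ℂ, ∀ a, F (eV m ⊗ₜ a) = p • a + q • Gop m a := by
    refine aux_S hm (F ∘ₗ TensorProduct.mk ℂ _ _ (eV m)) ?_ ?_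
    · intro v w a
      have h := hi v w (eV m) a
      have h0 : Amap m v w (eV m) = 0 := by simp [Amap, eV, pD]
      rw [h0, zero_tmul, map_zero, zero_add] at h
      simpa using h
    · intro v lam a
      have h := hiii v lam (eV m) a
      have h0 : Hmap m v lam (eV m) = 0 := by simp [Hmap, eV, pD, pW]
      rw [h0, zero_tmul, map_zero, zero_add, tmul_sub, map_sub, tmul_smul, map_smul] at h
      simpa using h
  obtain ⟨p, q, hS⟩ := hS
  have hr : ((Real.sqrt 2 : ℂ))⁻¹ * ((Real.sqrt 2 : ℂ))⁻¹ = 1 / 2 := by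
    rw [← mul_inv, ← Complex.ofReal_mul, Real.mul_self_sqrt (by norm_num)]
    norm_num
  have hr2 : (Real.sqrt 2 : ℂ) = 2 * ((Real.sqrt 2 : ℂ))⁻¹ := by
    have h0 : (Real.sqrt 2 : ℂ) ≠ 0 := by
      intro h; rw [h] at hr; norm_num at hr
    field_simp
    rw [sq, ← Complex.ofReal_mul, Real.mul_self_sqrt (by norm_num)]
    norm_num
  rw [piMap]
  generalize hs : (Real.sqrt 2 : ℂ) = s at *
  generalize hrr : s⁻¹ = r at *
  -- action of F on W
  have hFW : ∀ v a, F ((v, 0, 0) ⊗ₜ a) = (q * s) • Xop m v a := by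
    intro v a
    have h := hii v (eV m) a
    have h0 : Cmap m v (eV m) = (v, 0, 0) := by simp [Cmap, eV, pD, pC, iW, iC]
    rw [h0, hS, hS] at h
    rw [eq_sub_of_add_eq h]
    simp only [map_add, map_smul, aux_Gop_mul, aux_Gop_Gop]
    rw [hr2]
    module
  have hFD : ∀ lam a, F ((0, lam, 0) ⊗ₜ a) = (q * s) • Dop m lam a := by
    intro lam a
    have h := hiv lam (eV m) a
    have h0 : Bmap m lam (eV m) = - (0, lam, 0) := by simp [Bmap, eV, pW, pC, iD, iC]
    rw [h0, hS, hS, neg_tmul, map_neg, neg_add_eq_iff_eq_add] at h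
    rw [← sub_eq_iff_eq_add] at h
    rw [← h]
    simp only [map_add, map_smul, aux_Dop_Gop, aux_Gop_Gop, map_neg]
    rw [hr2]
    module
  have hp : p = 0 := by
    let i0 : Fin m := ⟨0, hm⟩
    have h2 : wD m i0 (wB m i0) = 1 := by simp [wD, wB]
    have h := hii (wB m i0) (0, wD m i0, 0) (algebraMap ℂ _ 1)
    have h0 : Cmap m (wB m i0) (0, wD m i0, 0) = - eV m := by
      simp [Cmap, eV, pD, pC, iW, iC, evalW, h2]
    rw [h0, neg_tmul, map_neg, hS, hFD, hFD] at h
    simp only [aux_Gop_algebraMap, aux_Dop_mul, aux_Dop_algebraMap, h2, map_zero, smul_zero,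
      sub_zero, one_smul, smul_smul] at h
    have h3 : (-(p + q) + r * (q * s)) • (algebraMap ℂ (SpinDelta m) 1) = 0 := by
      rw [← h]; module
    rw [map_one, smul_eq_zero] at h3
    have h4 := h3.resolve_right one_ne_zero
    rw [hr2] at h4
    linear_combination (-1) * h4 + 2 * q * hr
  refine ⟨q, ?_⟩
  apply TensorProduct.ext'
  rintro ⟨v, lam, c⟩ a
  have hx : ((v, lam, c) : SpinV m) = (v, 0, 0) + (0, lam, 0) + c • eV m := by
    simp [eV]
  have hF : F ((v, lam, c) ⊗ₜ a)
      = (q * s) • Xop m v a + (q * s) • Dop m lam a + c • (p • a + q • Gop m a) := by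
    rw [hx, add_tmul, add_tmul, ← smul_tmul', map_add, map_add, map_smul, hFW, hFD, hS]
  have hpi : piB m (v, lam, c) a = s • (Xop m v a + Dop m lam a) + c • Gop m a := by
    simp [piB, pW, pD, pC, Xop, Dop, hs]
  rw [LinearMap.smul_apply, TensorProduct.lift.tmul, hpi, hF, hp]
  module
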